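/- Let α > 2. Every singularity of the N-body problem is a collision singularity: if a solution x(t) has a singularity at σ < ∞, then x(t) converges as t → σ⁻ to a definite point of the collision set Δ. Equivalently, for α > 2 no solution can have I(x(t)) → ∞ as t → σ⁻ at a finite singularity time σ. -/

import Mathlib

/- STATEMENT 2: for α > 2 every singularity of the N-body problem is a collision
singularity: at a finite singular time σ the solution converges to a point of the
collision set Δ. -/

namespace NBodyPaper

open Real Filter

noncomputable section

abbrev E3 := EuclideanSpace ℝ (Fin 3)

variable {N : ℕ}

/-- The α-homogeneous potential `U(x) = -∑_{i<j} m_i m_j / |x_i - x_j|^α`. -/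
def pot (α : ℝ) (m : Fin N → ℝ) (q : Fin N → E3) : ℝ :=
  -∑ i : Fin N, ∑ j ∈ Finset.univ.filter (fun j => i < j), m i * m j / ‖q i - q j‖ ^ α

def kinetic (m : Fin N → ℝ) (v : Fin N → E3) : ℝ := (1 / 2) * ∑ i, m i * ‖v i‖ ^ 2

/-- Total energy `E(x, ẋ)`. -/
def energy (α : ℝ) (m : Fin N → ℝ) (q v : Fin N → E3) : ℝ := kinetic m v + pot α m q

/-- Moment of inertia `I(x) = ∑ m_i |x_i|²`. -/
def inertia (m : Fin N → ℝ) (q : Fin N → E3) : ℝ := ∑ i, m i * ‖q i‖ ^ 2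

/-- `ẍ_i = -∇_i U / m_i = -α ∑_{j≠i} m_j (x_i - x_j)/|x_i - x_j|^{α+2}`. -/
def accel (α : ℝ) (m : Fin N → ℝ) (q : Fin N → E3) (i : Fin N) : E3 :=
  (-α) • ∑ j ∈ Finset.univ.erase i, (m j / ‖q i - q j‖ ^ (α + 2)) • (q i - q j)

/-- Collision-free configuration. -/
def OffDiag (q : Fin N → E3) : Prop := ∀ i j, i ≠ j → q i ≠ q j

/-- The time interval `[0, σ)` for `σ ∈ (0, ∞]`. -/
def Dom (σ : EReal) : Set ℝ := {t : ℝ | 0 ≤ t ∧ (t : EReal) < σ}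

/-- `x` (with velocity `v`) solves the N-body equations on the set `s`. -/
def IsSolnOn (α : ℝ) (m : Fin N → ℝ) (x v : ℝ → Fin N → E3) (s : Set ℝ) : Prop :=
  ∀ t ∈ s, OffDiag (x t) ∧
    ∀ i, HasDerivAt (fun τ => x τ i) (v t i) t ∧ HasDerivAt (fun τ => v τ i) (accel α m (x t) i) t

/-- `x` is a solution on its maximal interval of existence `[0, σ)`:
it solves the equations there and no solution extends it to a longer interval. -/
def IsMaxSoln (α : ℝ) (m : Fin N → ℝ) (σ : EReal) (x v : ℝ → Fin N → E3) : Prop :=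
  0 < σ ∧ IsSolnOn α m x v (Dom σ) ∧
    ∀ (σ' : EReal) (x' v' : ℝ → Fin N → E3), IsSolnOn α m x' v' (Dom σ') →
      (∀ t ∈ Dom σ, x' t = x t ∧ v' t = v t) → σ' ≤ σ

/- By the Lagrange–Jacobi identity the moment of inertia satisfies `Ï = 4 E + (2 α - 4) U`, and
`U ≤ 0`, so for `2 ≤ α` its second derivative is bounded above and `I` stays bounded on finite time
intervals; hence `x` has a cluster point `q` at `σ`. The inertia `I_q` about `q` obeys the same
identity up to the force tested against `q`, which remains bounded near `q` even if `q` is a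
collision. So `I_q` is semiconcave wherever it is small. Such a function cannot dip far below a
fixed level between two nearby times at which it attains that level; as `I_q` comes close to `0`
arbitrarily late, it therefore tends to `0`. If the limit `q` were collision-free, the forces would
stay bounded and the solution would extend past `σ`. -/

open Set
open scoped Topology RealInnerProductSpace

section Calculus

variable {E : Type*} [NormedAddCommGroup E]

theorem hasDerivAt_norm_rpow_of_ne_zero [InnerProductSpace ℝ E] (p : ℝ) {r : ℝ → E} {r' : E}
    {t : ℝ} (hr : HasDerivAt r r' t) (h0 : r t ≠ 0) :
    HasDerivAt (fun τ => ‖r τ‖ ^ p) (p * ‖r t‖ ^ (p - 2) * ⟪r t, r'⟫) t := by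
  have hsq (s c : ℝ) (hs : 0 ≤ s) : (s ^ 2) ^ c = s ^ (2 * c) := by
    rw [← rpow_two, ← rpow_mul hs]
  have hderiv := hr.norm_sq.rpow_const (p := p / 2)
    (Or.inl (pow_ne_zero 2 (norm_ne_zero_iff.2 h0)))
  simp only [hsq _ _ (norm_nonneg _)] at hderiv
  convert hderiv using 1
  · ring_nf
  · ring_nf

variable [NormedSpace ℝ E]

theorem exists_tendsto_nhdsLT_of_isBoundedUnder_deriv [CompleteSpace E] {f f' : ℝ → E} {σ : ℝ}
    (hf : ∀ᶠ t in 𝓝[<] σ, HasDerivAt f (f' t) t)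
    (hbdd : (𝓝[<] σ).IsBoundedUnder (· ≤ ·) fun t => ‖f' t‖) :
    ∃ p, Tendsto f (𝓝[<] σ) (𝓝 p) := by
  obtain ⟨C, hC⟩ := hbdd
  obtain ⟨c, hc, hcσ⟩ := mem_nhdsLT_iff_exists_Ioo_subset.1 (hf.and hC)
  have hlip : LipschitzOnWith C.toNNReal f (Ioo c σ) :=
    (convex_Ioo c σ).lipschitzOnWith_of_nnnorm_hasDerivWithin_le
      (fun t ht => (hcσ ht).1.hasDerivWithinAt) fun t ht => by
        rw [← norm_toNNReal]
        exact toNNReal_le_toNNReal (hcσ ht).2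
  exact CompleteSpace.complete <| (cauchy_nhds.mono nhdsWithin_le_nhds).map_of_le
    hlip.uniformContinuousOn (le_principal_iff.2 (Ioo_mem_nhdsLT hc))

theorem hasDerivWithinAt_Iic_of_tendsto {f f' : ℝ → E} {e : E} {σ : ℝ}
    (hf : ∀ᶠ t in 𝓝[<] σ, HasDerivAt f (f' t) t) (hcont : ContinuousWithinAt f (Iio σ) σ)
    (hlim : Tendsto f' (𝓝[<] σ) (𝓝 e)) : HasDerivWithinAt f e (Iic σ) σ := by
  refine hasDerivWithinAt_Iic_of_tendsto_deriv (s := {t | HasDerivAt f (f' t) t} ∩ Iio σ)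
    (fun t ht => ht.1.differentiableAt.differentiableWithinAt) (hcont.mono inter_subset_right)
    (inter_mem hf self_mem_nhdsWithin) (hlim.congr' ?_)
  filter_upwards [hf] with t ht using ht.deriv.symm

theorem exists_integralCurve_extension [CompleteSpace E] {F : E → E} {z : ℝ → E} {z₀ : E} {σ : ℝ}
    (hF : ContDiffAt ℝ 1 F z₀) (hz : ∀ᶠ t in 𝓝[<] σ, HasDerivAt z (F (z t)) t)
    (hlim : Tendsto z (𝓝[<] σ) (𝓝 z₀)) :
    ∃ w : ℝ → E, EqOn w z (Iio σ) ∧ w σ = z₀ ∧ ∀ᶠ t in 𝓝 σ, HasDerivAt w (F (w t)) t := by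
  obtain ⟨γ, rfl, ε, hε, hγ⟩ :=
    hF.exists_forall_mem_closedBall_exists_eq_forall_mem_Ioo_hasDerivAt₀ σ
  set w : ℝ → E := fun t => if t < σ then z t else γ t
  have hwz : EqOn w z (Iio σ) := fun t ht => if_pos ht
  have hwγ : EqOn w γ (Ici σ) := fun t ht => if_neg (not_lt.2 ht)
  have hwσ : w σ = γ σ := hwγ self_mem_Ici
  have hw_left : ∀ᶠ t in 𝓝[<] σ, HasDerivAt w (F (w t)) t := by
    filter_upwards [hz, self_mem_nhdsWithin] with t ht htσ
    rw [hwz htσ]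
    exact ht.congr_of_eventuallyEq (hwz.eventuallyEq_of_mem (Iio_mem_nhds htσ))
  have hw_right : ∀ᶠ t in 𝓝[>] σ, HasDerivAt w (F (w t)) t := by
    filter_upwards [Ioo_mem_nhdsGT (lt_add_of_pos_right σ hε)] with t ht
    rw [hwγ ht.1.le]
    exact (hγ t ⟨by linarith [ht.1], ht.2⟩).congr_of_eventuallyEq
      (hwγ.eventuallyEq_of_mem (Ici_mem_nhds ht.1))
  have hw_lim : Tendsto w (𝓝[<] σ) (𝓝 (w σ)) :=
    hwσ ▸ hlim.congr' (hwz.symm.eventuallyEq_of_mem self_mem_nhdsWithin)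
  have hw_at : HasDerivAt w (F (w σ)) σ := by
    have hleft := hasDerivWithinAt_Iic_of_tendsto hw_left hw_lim
      ((hwσ ▸ hF.continuousAt).tendsto.comp hw_lim)
    have hright : HasDerivWithinAt w (F (w σ)) (Ici σ) σ := by
      rw [hwσ]
      exact (hγ σ ⟨by linarith, by linarith⟩).hasDerivWithinAt.congr hwγ hwσ
    simpa only [Iic_union_Ici, hasDerivWithinAt_univ] using hleft.union hright
  refine ⟨w, hwz, hwσ, ?_⟩
  rw [← nhdsNE_sup_pure, ← nhdsLT_sup_nhdsGT]
  exact eventually_sup.2 ⟨eventually_sup.2 ⟨hw_left, hw_right⟩, eventually_pure.2 hw_at⟩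

end Calculus

section Semiconcave

variable {f f' f'' : ℝ → ℝ} {C ε : ℝ}

/- A function with second derivative at most `C` is strongly concave with modulus `-C`, which is
negative when `C` is positive: it is concave only up to a quadratic error. -/
theorem strongConcaveOn_of_deriv2_le {D : Set ℝ} (hD : Convex ℝ D)
    (hf : ∀ t ∈ D, HasDerivAt f (f' t) t) (hf' : ∀ t ∈ interior D, HasDerivAt f' (f'' t) t)
    (hC : ∀ t ∈ interior D, f'' t ≤ C) : StrongConcaveOn D (-C) f := by
  simp only [strongConcaveOn_iff_convex, norm_eq_abs, sq_abs]
  have hg : ∀ t ∈ D, HasDerivAt (fun s => f s + -C / 2 * s ^ 2) (f' t - C * t) t := fun t ht =>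
    ((hf t ht).add ((hasDerivAt_pow 2 t).const_mul (-C / 2))).congr_deriv (by ring)
  have hg' : ∀ t ∈ interior D, HasDerivAt (fun s => f' s - C * s) (f'' t - C) t := fun t ht =>
    ((hf' t ht).sub ((hasDerivAt_id t).const_mul C)).congr_deriv (by ring)
  exact concaveOn_of_hasDerivWithinAt2_nonpos hD
    (fun t ht => (hg t ht).continuousAt.continuousWithinAt)
    (fun t ht => (hg t (interior_subset ht)).hasDerivWithinAt)
    (fun t ht => (hg' t ht).hasDerivWithinAt) fun t ht => sub_nonpos.2 (hC t ht)

theorem le_quadratic_of_strongConcaveOn {D : Set ℝ} {a t f'a : ℝ} (hf : StrongConcaveOn D (-C) f)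
    (ha : a ∈ D) (ht : t ∈ D) (hfa : HasDerivAt f f'a a) :
    f t ≤ f a + f'a * (t - a) + C / 2 * (t - a) ^ 2 := by
  simp only [strongConcaveOn_iff_convex, norm_eq_abs, sq_abs] at hf
  have hga : HasDerivAt (fun s => f s + -C / 2 * s ^ 2) (f'a - C * a) a :=
    (hfa.add ((hasDerivAt_pow 2 a).const_mul (-C / 2))).congr_deriv (by ring)
  rcases lt_trichotomy a t with hat | rfl | hta
  · have h := hf.slope_le_of_hasDerivAt ha ht hat hga
    rw [slope_def_field, div_le_iff₀ (sub_pos.2 hat)] at h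
    linarith
  · simp
  · have h := hf.le_slope_of_hasDerivAt ht ha hta hga
    rw [slope_def_field, le_div_iff₀ (sub_pos.2 hta)] at h
    linarith

theorem bddAbove_image_of_deriv2_le {D : Set ℝ} (hD : Convex ℝ D) (hbdd : Bornology.IsBounded D)
    (hf : ∀ t ∈ D, HasDerivAt f (f' t) t) (hf' : ∀ t ∈ D, HasDerivAt f' (f'' t) t)
    (hC : ∀ t ∈ D, f'' t ≤ C) : BddAbove (f '' D) := by
  rcases D.eq_empty_or_nonempty with rfl | ⟨a, ha⟩
  · simp
  have hconc : StrongConcaveOn D (-C) f := strongConcaveOn_of_deriv2_le hD hf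
    (fun t ht => hf' t (interior_subset ht)) fun t ht => hC t (interior_subset ht)
  have hquad : Continuous fun t => f a + f' a * (t - a) + C / 2 * (t - a) ^ 2 := by fun_prop
  obtain ⟨M, hM⟩ := hbdd.isCompact_closure.bddAbove_image hquad.continuousOn
  refine ⟨M, forall_mem_image.2 fun t ht => ?_⟩
  exact (le_quadratic_of_strongConcaveOn hconc ha ht (hf a ha)).trans
    (hM (mem_image_of_mem _ (subset_closure ht)))

theorem le_add_sq_of_strongConcaveOn {V : Type*} [NormedAddCommGroup V] [NormedSpace ℝ V]
    {D : Set V} {g : V → ℝ} {a b t : V} (hg : StrongConcaveOn D (-C) g) (hC : 0 ≤ C) (ha : a ∈ D)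
    (hb : b ∈ D) (hga : ε ≤ g a) (hgb : ε ≤ g b) (ht : t ∈ segment ℝ a b) :
    ε ≤ g t + C / 8 * ‖a - b‖ ^ 2 := by
  obtain ⟨k, l, hk, hl, hkl, rfl⟩ := ht
  have hchord := hg.2 ha hb hk hl hkl
  simp only [smul_eq_mul] at hchord
  have hkl4 : k * l ≤ 1 / 4 := by nlinarith [sq_nonneg (k - l)]
  have hmean : ε ≤ k * g a + l * g b := by
    calc ε = k * ε + l * ε := by rw [← add_mul, hkl, one_mul]
      _ ≤ k * g a + l * g b := by gcongr
  have herr := mul_le_mul_of_nonneg_right hkl4 (by positivity : 0 ≤ C / 2 * ‖a - b‖ ^ 2)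
  linarith

theorem exists_excursion_below {X Y : Type*} [ConditionallyCompleteLinearOrder X]
    [TopologicalSpace X] [OrderTopology X] [LinearOrder Y] [TopologicalSpace Y]
    [OrderClosedTopology Y] {g : X → Y} {a b t : X} {y : Y} (hg : ContinuousOn g (Icc a b))
    (ha : y ≤ g a) (hb : y ≤ g b) (ht : t ∈ Icc a b) :
    ∃ c ∈ Icc a t, ∃ d ∈ Icc t b, y ≤ g c ∧ y ≤ g d ∧ ∀ s ∈ Ioo c d, g s < y := by
  have hcompact {c d : X} (hsub : Icc c d ⊆ Icc a b) : IsCompact (Icc c d ∩ g ⁻¹' Ici y) :=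
    isCompact_Icc.of_isClosed_subset
      ((hg.mono hsub).preimage_isClosed_of_isClosed isClosed_Icc isClosed_Ici) inter_subset_left
  obtain ⟨c, ⟨hct, hyc⟩, hc_max⟩ := (hcompact (Icc_subset_Icc_right ht.2)).exists_isGreatest
    ⟨a, ⟨le_rfl, ht.1⟩, ha⟩
  obtain ⟨d, ⟨htd, hyd⟩, hd_min⟩ := (hcompact (Icc_subset_Icc_left ht.1)).exists_isLeast
    ⟨b, ⟨ht.2, le_rfl⟩, hb⟩
  refine ⟨c, hct, d, htd, hyc, hyd, fun s hs => ?_⟩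
  by_contra! hys
  rcases le_total s t with hst | hts
  · exact hs.1.not_ge (hc_max ⟨⟨hct.1.trans hs.1.le, hst⟩, hys⟩)
  · exact hs.2.not_ge (hd_min ⟨⟨hts, hs.2.le.trans htd.2⟩, hys⟩)

theorem le_add_sq_of_deriv2_le_of_lt {a b t : ℝ} (hC0 : 0 ≤ C)
    (hf : ∀ s ∈ Icc a b, HasDerivAt f (f' s) s) (hf' : ∀ s ∈ Icc a b, HasDerivAt f' (f'' s) s)
    (hC : ∀ s ∈ Icc a b, f s < ε → f'' s ≤ C) (ha : ε ≤ f a) (hb : ε ≤ f b)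
    (ht : t ∈ Icc a b) : ε ≤ f t + C / 8 * (b - a) ^ 2 := by
  obtain ⟨c, hc, d, hd, hεc, hεd, hlt⟩ := exists_excursion_below
    (fun s hs => (hf s hs).continuousAt.continuousWithinAt) ha hb ht
  have hsub : Icc c d ⊆ Icc a b := Icc_subset_Icc hc.1 hd.2
  have hcd : c ≤ d := hc.2.trans hd.1
  have hconc : StrongConcaveOn (Icc c d) (-C) f := by
    refine strongConcaveOn_of_deriv2_le (convex_Icc c d) (fun s hs => hf s (hsub hs))
      (fun s hs => hf' s (hsub (interior_subset hs))) fun s hs => ?_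
    exact hC s (hsub (interior_subset hs)) (hlt s (interior_Icc (a := c) ▸ hs))
  calc ε ≤ f t + C / 8 * ‖c - d‖ ^ 2 :=
        le_add_sq_of_strongConcaveOn hconc hC0 (left_mem_Icc.2 hcd) (right_mem_Icc.2 hcd) hεc hεd
          (segment_eq_Icc hcd ▸ ⟨hc.2, hd.1⟩)
    _ = f t + C / 8 * (d - c) ^ 2 := by rw [norm_eq_abs, sq_abs, ← neg_sub d c, neg_sq]
    _ ≤ f t + C / 8 * (b - a) ^ 2 := by
        have : 0 ≤ d - c := sub_nonneg.2 hcd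
        gcongr
        exacts [hd.2, hc.1]

theorem tendsto_zero_of_mapClusterPt_of_deriv2_le {σ ρ : ℝ} (hρ : 0 < ρ)
    (hf : ∀ᶠ t in 𝓝[<] σ, HasDerivAt f (f' t) t) (hf' : ∀ᶠ t in 𝓝[<] σ, HasDerivAt f' (f'' t) t)
    (hC : ∀ᶠ t in 𝓝[<] σ, f t < ρ → f'' t ≤ C) (h0 : ∀ᶠ t in 𝓝[<] σ, 0 ≤ f t)
    (hcluster : MapClusterPt 0 (𝓝[<] σ) f) : Tendsto f (𝓝[<] σ) (𝓝 0) := by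
  suffices hsmall : ∀ ε > 0, ε ≤ ρ → ∀ᶠ t in 𝓝[<] σ, f t < ε by
    refine tendsto_order.2 ⟨fun ε hε => h0.mono fun t => hε.trans_le, fun ε hε => ?_⟩
    exact (hsmall (min ε ρ) (lt_min hε hρ) (min_le_right _ _)).mono
      fun t ht => ht.trans_le (min_le_left _ _)
  intro ε hε hερ
  by_contra hcon
  have hbig : ∃ᶠ t in 𝓝[<] σ, ε ≤ f t := by
    simpa only [not_eventually, not_lt] using hcon
  have hshort : ∀ᶠ a in 𝓝[<] σ, max C 0 / 8 * (σ - a) ^ 2 < ε / 2 := by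
    have hcont : Continuous fun a => max C 0 / 8 * (σ - a) ^ 2 := by fun_prop
    refine (hcont.tendsto σ).mono_left nhdsWithin_le_nhds |>.eventually_lt_const ?_
    simpa using hε
  obtain ⟨c, hcσ, hc⟩ := mem_nhdsLT_iff_exists_Ioo_subset.1 ((hf.and hf').and hC)
  obtain ⟨a, hεa, ha, haσ⟩ := (hbig.and_eventually (hshort.and (Ioo_mem_nhdsLT hcσ))).exists
  obtain ⟨t, htε, hat, htσ⟩ := ((hcluster.frequently (Iio_mem_nhds (half_pos hε))).and_eventually
    (Ioo_mem_nhdsLT haσ.2)).exists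
  obtain ⟨b, hεb, htb, hbσ⟩ := (hbig.and_eventually (Ioo_mem_nhdsLT htσ)).exists
  have hsub : Icc a b ⊆ Ioo c σ := Icc_subset_Ioo haσ.1 hbσ
  have hexcursion : ε ≤ f t + max C 0 / 8 * (b - a) ^ 2 :=
    le_add_sq_of_deriv2_le_of_lt (le_max_right C 0) (fun s hs => (hc (hsub hs)).1.1)
      (fun s hs => (hc (hsub hs)).1.2)
      (fun s hs hlt => ((hc (hsub hs)).2 (hlt.trans_le hερ)).trans (le_max_left C 0))
      hεa hεb ⟨hat.le, htb.le⟩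
  have hlength : max C 0 / 8 * (b - a) ^ 2 ≤ max C 0 / 8 * (σ - a) ^ 2 := by
    gcongr
    linarith
  linarith

end Semiconcave

/-- The mass inner product `∑ m_i ⟪u_i, w_i⟫` on configuration space: it turns the moment of inertia
and the kinetic energy into squared norms and `accel` into minus the gradient of `pot`. -/
def massInner (m : Fin N → ℝ) (u w : Fin N → E3) : ℝ := ∑ i, m i * ⟪u i, w i⟫

section Potential

variable {α : ℝ} {m : Fin N → ℝ}

theorem massInner_comm (m : Fin N → ℝ) (u w : Fin N → E3) : massInner m u w = massInner m w u := by
  simp only [massInner, real_inner_comm]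

theorem massInner_sub_left (m : Fin N → ℝ) (u u' w : Fin N → E3) :
    massInner m (u - u') w = massInner m u w - massInner m u' w := by
  simp only [massInner, Pi.sub_apply, inner_sub_left, mul_sub, Finset.sum_sub_distrib]

theorem inertia_eq_massInner (m : Fin N → ℝ) (q : Fin N → E3) : inertia m q = massInner m q q := by
  simp only [inertia, massInner, real_inner_self_eq_norm_sq]

theorem kinetic_eq_massInner (m : Fin N → ℝ) (v : Fin N → E3) :
    kinetic m v = 1 / 2 * massInner m v v := by
  simp only [kinetic, massInner, real_inner_self_eq_norm_sq]

theorem hasDerivAt_massInner (m : Fin N → ℝ) {u w : ℝ → Fin N → E3} {u' w' : Fin N → E3} {t : ℝ}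
    (hu : HasDerivAt u u' t) (hw : HasDerivAt w w' t) :
    HasDerivAt (fun τ => massInner m (u τ) (w τ)) (massInner m (u t) w' + massInner m u' (w t))
      t := by
  simp only [massInner, ← Finset.sum_add_distrib, ← mul_add]
  exact HasDerivAt.fun_sum fun i _ =>
    ((hasDerivAt_pi.1 hu i).inner ℝ (hasDerivAt_pi.1 hw i)).const_mul (m i)

theorem massInner_accel (α : ℝ) (m : Fin N → ℝ) (q w : Fin N → E3) :
    massInner m w (accel α m q) = -(α / 2) *
      ∑ i, ∑ j, m i * m j / ‖q i - q j‖ ^ (α + 2) * ⟪q i - q j, w i - w j⟫ := by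
  set k : Fin N → Fin N → ℝ := fun i j => m i * m j / ‖q i - q j‖ ^ (α + 2)
  have hexpand : massInner m w (accel α m q) = -α * ∑ i, ∑ j, k i j * ⟪q i - q j, w i⟫ := by
    have herase (i : Fin N) :
        ∑ j ∈ Finset.univ.erase i, (m j / ‖q i - q j‖ ^ (α + 2)) • (q i - q j) =
          ∑ j, (m j / ‖q i - q j‖ ^ (α + 2)) • (q i - q j) :=
      Finset.sum_erase _ (by rw [sub_self, smul_zero])
    simp only [massInner, accel, herase, k, inner_smul_right, inner_sum, Finset.mul_sum]
    refine Finset.sum_congr rfl fun i _ => Finset.sum_congr rfl fun j _ => ?_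
    rw [real_inner_comm]
    ring
  have hswap : ∑ i, ∑ j, k i j * ⟪q i - q j, w i⟫ = -∑ i, ∑ j, k i j * ⟪q i - q j, w j⟫ := by
    rw [Finset.sum_comm]
    simp only [← Finset.sum_neg_distrib]
    refine Finset.sum_congr rfl fun i _ => Finset.sum_congr rfl fun j _ => ?_
    simp only [k]
    rw [← neg_sub (q i) (q j), inner_neg_left, norm_neg]
    ring
  simp only [inner_sub_right, mul_sub, Finset.sum_sub_distrib]
  rw [hexpand]
  linear_combination (-α / 2) * hswap

theorem sum_sum_eq_two_nsmul_sum_sum_lt {ι M : Type*} [Fintype ι] [LinearOrder ι]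
    [AddCommMonoid M] {f : ι → ι → M} (hsymm : ∀ i j, f i j = f j i) (hdiag : ∀ i, f i i = 0) :
    ∑ i, ∑ j, f i j = 2 • ∑ i, ∑ j with i < j, f i j := by
  have hsplit : ∑ i, ∑ j, f i j =
      ∑ i, ∑ j with i < j, f i j + ∑ i, ∑ j with j < i, f i j := by
    simp only [Finset.sum_filter, ← Finset.sum_add_distrib]
    refine Finset.sum_congr rfl fun i _ => Finset.sum_congr rfl fun j _ => ?_
    rcases lt_trichotomy i j with h | rfl | h
    · simp [h, h.not_gt]
    · simp [hdiag]
    · simp [h, h.not_gt]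
  have hswap : ∑ i, ∑ j with j < i, f i j = ∑ i, ∑ j with i < j, f i j := by
    simp only [Finset.sum_filter]
    rw [Finset.sum_comm]
    simp only [hsymm]
  rw [hsplit, hswap, two_nsmul]

theorem pot_eq_sum_univ (hα : α ≠ 0) (m : Fin N → ℝ) (q : Fin N → E3) :
    pot α m q = -(1 / 2 * ∑ i, ∑ j, m i * m j / ‖q i - q j‖ ^ α) := by
  rw [pot, sum_sum_eq_two_nsmul_sum_sum_lt, nsmul_eq_mul]
  · push_cast
    ring
  · intro i j
    rw [norm_sub_rev, mul_comm (m i)]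
  · intro i
    simp [zero_rpow hα]

theorem pot_nonpos (hm : ∀ i, 0 ≤ m i) (q : Fin N → E3) : pot α m q ≤ 0 :=
  neg_nonpos.2 <| Finset.sum_nonneg fun i _ => Finset.sum_nonneg fun j _ =>
    div_nonneg (mul_nonneg (hm i) (hm j)) (rpow_nonneg (norm_nonneg _) _)

-- Euler's identity for the homogeneous function `pot`.
theorem massInner_self_accel (hα : α ≠ 0) (m : Fin N → ℝ) (q : Fin N → E3) :
    massInner m q (accel α m q) = α * pot α m q := by
  have hterm (i j : Fin N) : m i * m j / ‖q i - q j‖ ^ (α + 2) * ⟪q i - q j, q i - q j⟫ =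
      m i * m j / ‖q i - q j‖ ^ α := by
    rcases eq_or_ne (q i - q j) 0 with h | h
    · simp [h, zero_rpow hα]
    · have hpos : 0 < ‖q i - q j‖ := norm_pos_iff.2 h
      rw [real_inner_self_eq_norm_sq, rpow_add hpos, rpow_two]
      field_simp
  rw [massInner_accel, pot_eq_sum_univ hα]
  simp only [hterm]
  ring

theorem hasDerivAt_pot (hα : α ≠ 0) (m : Fin N → ℝ) {x : ℝ → Fin N → E3} {w : Fin N → E3} {t : ℝ}
    (hoff : OffDiag (x t)) (hx : HasDerivAt x w t) :
    HasDerivAt (fun τ => pot α m (x τ)) (-massInner m w (accel α m (x t))) t := by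
  have hterm (i j : Fin N) : HasDerivAt (fun τ => m i * m j / ‖x τ i - x τ j‖ ^ α)
      (-α * (m i * m j / ‖x t i - x t j‖ ^ (α + 2) * ⟪x t i - x t j, w i - w j⟫)) t := by
    rcases eq_or_ne i j with rfl | hij
    · simpa using hasDerivAt_const t _
    · have hr := (hasDerivAt_pi.1 hx i).sub (hasDerivAt_pi.1 hx j)
      have hnorm := hasDerivAt_norm_rpow_of_ne_zero (-α) hr (sub_ne_zero.2 (hoff i j hij))
      simp only [Pi.sub_apply, ← neg_add', rpow_neg (norm_nonneg _)] at hnorm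
      exact (hnorm.const_mul (m i * m j)).congr_deriv (by ring)
  simp only [pot_eq_sum_univ hα]
  refine ((HasDerivAt.fun_sum (u := Finset.univ) fun i _ => HasDerivAt.fun_sum
    (u := Finset.univ) fun j _ => hterm i j).const_mul (1 / 2)).neg.congr_deriv ?_
  simp only [massInner_accel, ← Finset.mul_sum]
  ring

/- The individual forces blow up when `q` is a collision, but a pair that collides in `q` does not
contribute to the force tested against `q` itself. -/
theorem continuousAt_massInner_accel (α : ℝ) (m : Fin N → ℝ) (q : Fin N → E3) :
    ContinuousAt (fun y => massInner m q (accel α m y)) q := by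
  simp only [massInner_accel]
  refine continuousAt_const.mul (tendsto_finsetSum _ fun i _ => tendsto_finsetSum _ fun j _ => ?_)
  rcases eq_or_ne (q i - q j) 0 with h | h
  · simp [h]
  · have hsub : ContinuousAt (fun y : Fin N → E3 => y i - y j) q := by fun_prop
    have hrpow := hsub.norm.rpow_const (p := α + 2) (Or.inl (norm_ne_zero_iff.2 h))
    have hne : ‖q i - q j‖ ^ (α + 2) ≠ 0 := (rpow_pos_of_pos (norm_pos_iff.2 h) _).ne'
    exact (continuousAt_const.div hrpow hne).mul (hsub.inner continuousAt_const)

theorem isOpen_offDiag : IsOpen {q : Fin N → E3 | OffDiag q} := by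
  simp only [OffDiag, ofPred_forall]
  exact isOpen_iInter_of_finite fun i => isOpen_iInter_of_finite fun j =>
    isOpen_iInter_of_finite fun _ => isOpen_ne_fun (continuous_apply i) (continuous_apply j)

theorem contDiffAt_accel {n : WithTop ℕ∞} (α : ℝ) (m : Fin N → ℝ) {q : Fin N → E3}
    (hq : OffDiag q) : ContDiffAt ℝ n (accel α m) q := by
  refine contDiffAt_pi.2 fun i => ContDiffAt.fun_smul contDiffAt_const
    (ContDiffAt.sum fun j hj => ?_)
  have hne : q i - q j ≠ 0 := sub_ne_zero.2 (hq i j (Finset.ne_of_mem_erase hj).symm)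
  have hsub : ContDiffAt ℝ n (fun y : Fin N → E3 => y i - y j) q := by fun_prop
  have hrpow := (hsub.norm ℝ hne).rpow_const_of_ne (p := α + 2) (norm_ne_zero_iff.2 hne)
  exact (contDiffAt_const.div hrpow (rpow_pos_of_pos (norm_pos_iff.2 hne) _).ne').fun_smul hsub

end Potential

section Inertia

variable {m : Fin N → ℝ}

theorem inertia_nonneg (hm : ∀ i, 0 ≤ m i) (q : Fin N → E3) : 0 ≤ inertia m q :=
  Finset.sum_nonneg fun i _ => mul_nonneg (hm i) (sq_nonneg _)

theorem norm_le_sqrt_inertia (hm : ∀ i, 0 < m i) (q : Fin N → E3) :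
    ‖q‖ ≤ √((∑ i, (m i)⁻¹) * inertia m q) := by
  refine (pi_norm_le_iff_of_nonneg (sqrt_nonneg _)).2 fun i => le_sqrt_of_sq_le ?_
  have hinv (j : Fin N) : 0 ≤ (m j)⁻¹ := (inv_pos.2 (hm j)).le
  have hterm (j : Fin N) : 0 ≤ m j * ‖q j‖ ^ 2 := mul_nonneg (hm j).le (sq_nonneg _)
  calc ‖q i‖ ^ 2 = (m i)⁻¹ * (m i * ‖q i‖ ^ 2) := (inv_mul_cancel_left₀ (hm i).ne' _).symm
    _ ≤ (∑ j, (m j)⁻¹) * inertia m q :=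
        mul_le_mul (Finset.single_le_sum (fun j _ => hinv j) (Finset.mem_univ i))
          (Finset.single_le_sum (fun j _ => hterm j) (Finset.mem_univ i)) (hterm i)
          (Finset.sum_nonneg fun j _ => hinv j)

theorem isBounded_of_bddAbove_inertia (hm : ∀ i, 0 < m i) {s : Set (Fin N → E3)}
    (hs : BddAbove (inertia m '' s)) : Bornology.IsBounded s := by
  obtain ⟨M, hM⟩ := hs
  refine isBounded_iff_forall_norm_le.2 ⟨√((∑ i, (m i)⁻¹) * M), fun q hq => ?_⟩
  have hinv : 0 ≤ ∑ i, (m i)⁻¹ := Finset.sum_nonneg fun i _ => (inv_pos.2 (hm i)).le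
  exact (norm_le_sqrt_inertia hm q).trans <| sqrt_le_sqrt <|
    mul_le_mul_of_nonneg_left (hM (mem_image_of_mem _ hq)) hinv

theorem tendsto_inertia_sub (m : Fin N → ℝ) (q : Fin N → E3) :
    Tendsto (fun y => inertia m (y - q)) (𝓝 q) (𝓝 0) := by
  have hcont : Continuous fun y => inertia m (y - q) := by
    unfold inertia
    fun_prop
  simpa [inertia] using hcont.tendsto q

theorem comap_inertia_sub_nhds_zero (hm : ∀ i, 0 < m i) (q : Fin N → E3) :
    comap (fun y => inertia m (y - q)) (𝓝 0) = 𝓝 q := by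
  refine le_antisymm ?_ (tendsto_inertia_sub m q).le_comap
  have hsqrt : Tendsto (fun s => √((∑ i, (m i)⁻¹) * s)) (𝓝 0) (𝓝 0) := by
    have hcont : Continuous fun s => √((∑ i, (m i)⁻¹) * s) := by fun_prop
    simpa using hcont.tendsto 0
  exact tendsto_id'.1 <| tendsto_iff_norm_sub_tendsto_zero.2 <|
    squeeze_zero (fun _ => norm_nonneg _) (fun y => norm_le_sqrt_inertia hm (y - q))
      (hsqrt.comp tendsto_comap)

theorem exists_forall_inertia_sub_lt (hm : ∀ i, 0 < m i) {q : Fin N → E3}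
    {P : (Fin N → E3) → Prop} (hP : ∀ᶠ y in 𝓝 q, P y) :
    ∃ ρ > 0, ∀ y, inertia m (y - q) < ρ → P y := by
  rw [← comap_inertia_sub_nhds_zero hm, eventually_comap] at hP
  obtain ⟨ρ, hρ, hball⟩ := Metric.eventually_nhds_iff.1 hP
  refine ⟨ρ, hρ, fun y hy => hball ?_ y rfl⟩
  rwa [dist_zero_right, norm_eq_abs, abs_of_nonneg (inertia_nonneg (fun i => (hm i).le) _)]

end Inertia

/-- The vector field `(x, v) ↦ (v, ẍ)` on phase space whose integral curves are the solutions of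
the N-body equations. -/
def phaseField (α : ℝ) (m : Fin N → ℝ) (z : (Fin N → E3) × (Fin N → E3)) :
    (Fin N → E3) × (Fin N → E3) :=
  (z.2, accel α m z.1)

namespace IsSolnOn

variable {α : ℝ} {m : Fin N → ℝ} {x v : ℝ → Fin N → E3} {s : Set ℝ} {t : ℝ}

theorem offDiag (hsol : IsSolnOn α m x v s) (ht : t ∈ s) : OffDiag (x t) := (hsol t ht).1

theorem hasDerivAt_position (hsol : IsSolnOn α m x v s) (ht : t ∈ s) : HasDerivAt x (v t) t :=
  hasDerivAt_pi.2 fun i => ((hsol t ht).2 i).1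

theorem hasDerivAt_velocity (hsol : IsSolnOn α m x v s) (ht : t ∈ s) :
    HasDerivAt v (accel α m (x t)) t :=
  hasDerivAt_pi.2 fun i => ((hsol t ht).2 i).2

theorem hasDerivAt_phase (hsol : IsSolnOn α m x v s) (ht : t ∈ s) :
    HasDerivAt (fun τ => (x τ, v τ)) (phaseField α m (x t, v t)) t :=
  (hsol.hasDerivAt_position ht).prodMk (hsol.hasDerivAt_velocity ht)

theorem of_hasDerivAt_phase {z : ℝ → (Fin N → E3) × (Fin N → E3)}
    (hoff : ∀ t ∈ s, OffDiag (z t).1) (hz : ∀ t ∈ s, HasDerivAt z (phaseField α m (z t)) t) :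
    IsSolnOn α m (fun t => (z t).1) (fun t => (z t).2) s := fun t ht =>
  ⟨hoff t ht, fun i => ⟨hasDerivAt_pi.1 (hz t ht).fst i, hasDerivAt_pi.1 (hz t ht).snd i⟩⟩

theorem hasDerivAt_energy (hα : α ≠ 0) (hsol : IsSolnOn α m x v s) (ht : t ∈ s) :
    HasDerivAt (fun τ => energy α m (x τ) (v τ)) 0 t := by
  have hv := hsol.hasDerivAt_velocity ht
  simp only [energy, kinetic_eq_massInner]
  refine (((hasDerivAt_massInner m hv hv).const_mul (1 / 2)).add
    (hasDerivAt_pot hα m (hsol.offDiag ht) (hsol.hasDerivAt_position ht))).congr_deriv ?_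
  rw [massInner_comm m (accel α m (x t))]
  ring

theorem exists_energy_eq (hα : α ≠ 0) (hsol : IsSolnOn α m x v s) (hs : Convex ℝ s) :
    ∃ E, ∀ t ∈ s, energy α m (x t) (v t) = E := by
  rcases s.eq_empty_or_nonempty with rfl | ⟨a, ha⟩
  · simp
  refine ⟨energy α m (x a) (v a), fun t ht => sub_eq_zero.1 <| norm_le_zero_iff.1 ?_⟩
  simpa only [zero_mul] using hs.norm_image_sub_le_of_norm_hasDerivWithin_le (C := 0)
    (fun τ hτ => (hsol.hasDerivAt_energy hα hτ).hasDerivWithinAt) (fun τ _ => norm_zero.le) ha ht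

theorem hasDerivAt_inertia_sub (hsol : IsSolnOn α m x v s) (a : Fin N → E3) (ht : t ∈ s) :
    HasDerivAt (fun τ => inertia m (x τ - a)) (2 * massInner m (x t - a) (v t)) t := by
  have hx := (hsol.hasDerivAt_position ht).sub_const a
  simp only [inertia_eq_massInner]
  refine (hasDerivAt_massInner m hx hx).congr_deriv ?_
  rw [massInner_comm m (v t)]
  ring

-- The Lagrange–Jacobi identity, with the moment of inertia taken about a configuration `a`.
theorem hasDerivAt_two_mul_massInner_sub (hα : α ≠ 0) (hsol : IsSolnOn α m x v s)
    (a : Fin N → E3) (ht : t ∈ s) :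
    HasDerivAt (fun τ => 2 * massInner m (x τ - a) (v τ))
      (4 * energy α m (x t) (v t) + (2 * α - 4) * pot α m (x t) -
        2 * massInner m a (accel α m (x t))) t := by
  refine ((hasDerivAt_massInner m ((hsol.hasDerivAt_position ht).sub_const a)
    (hsol.hasDerivAt_velocity ht)).const_mul 2).congr_deriv ?_
  rw [massInner_sub_left, massInner_self_accel hα, energy, kinetic_eq_massInner]
  ring

theorem isBounded_image (hα : 2 ≤ α) (hm : ∀ i, 0 < m i) (hsol : IsSolnOn α m x v s)
    (hs : Convex ℝ s) (hbdd : Bornology.IsBounded s) : Bornology.IsBounded (x '' s) := by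
  have hα0 : α ≠ 0 := by linarith
  obtain ⟨E, hE⟩ := hsol.exists_energy_eq hα0 hs
  refine isBounded_of_bddAbove_inertia hm ?_
  rw [image_image]
  simpa only [sub_zero] using bddAbove_image_of_deriv2_le (C := 4 * E) hs hbdd
    (fun t ht => hsol.hasDerivAt_inertia_sub 0 ht)
    (fun t ht => hsol.hasDerivAt_two_mul_massInner_sub hα0 0 ht) fun t ht => by
      have hpot : (2 * α - 4) * pot α m (x t) ≤ 0 :=
        mul_nonpos_of_nonneg_of_nonpos (by linarith) (pot_nonpos (fun i => (hm i).le) _)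
      simpa [massInner, hE t ht] using hpot

variable {c σ : ℝ}

theorem tendsto_of_mapClusterPt (hα : 2 ≤ α) (hm : ∀ i, 0 < m i)
    (hsol : IsSolnOn α m x v (Ico c σ)) (hcσ : c < σ) {q : Fin N → E3}
    (hq : MapClusterPt q (𝓝[<] σ) x) : Tendsto x (𝓝[<] σ) (𝓝 q) := by
  have hα0 : α ≠ 0 := by linarith
  have hm0 (i : Fin N) : 0 ≤ m i := (hm i).le
  have hdom : Ico c σ ∈ 𝓝[<] σ := Ico_mem_nhdsLT hcσ
  obtain ⟨E, hE⟩ := hsol.exists_energy_eq hα0 (convex_Ico c σ)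
  obtain ⟨ρ, hρ, hforce⟩ := exists_forall_inertia_sub_lt hm
    ((continuousAt_massInner_accel α m q).eventually_const_lt (sub_one_lt _))
  rw [← comap_inertia_sub_nhds_zero hm, tendsto_comap_iff]
  refine tendsto_zero_of_mapClusterPt_of_deriv2_le hρ
    (C := 4 * E - 2 * (massInner m q (accel α m q) - 1))
    (mem_of_superset hdom fun t ht => hsol.hasDerivAt_inertia_sub q ht)
    (mem_of_superset hdom fun t ht => hsol.hasDerivAt_two_mul_massInner_sub hα0 q ht)
    (mem_of_superset hdom fun t ht hlt => ?_)
    (Eventually.of_forall fun t => inertia_nonneg hm0 _)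
    (hq.tendsto_comp (tendsto_inertia_sub m q))
  have hpot : (2 * α - 4) * pot α m (x t) ≤ 0 :=
    mul_nonpos_of_nonneg_of_nonpos (by linarith) (pot_nonpos hm0 _)
  rw [hE t ht]
  linarith [hforce (x t) hlt]

theorem exists_tendsto (hα : 2 ≤ α) (hm : ∀ i, 0 < m i) (hsol : IsSolnOn α m x v (Ico c σ))
    (hcσ : c < σ) : ∃ q, Tendsto x (𝓝[<] σ) (𝓝 q) := by
  have hbdd := hsol.isBounded_image hα hm (convex_Ico c σ) (Metric.isBounded_Ico c σ)
  have hmem : ∀ᶠ t in 𝓝[<] σ, x t ∈ closure (x '' Ico c σ) :=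
    mem_of_superset (Ico_mem_nhdsLT hcσ) fun t ht => subset_closure (mem_image_of_mem x ht)
  obtain ⟨q, -, hq⟩ := hbdd.isCompact_closure.exists_mapClusterPt_of_frequently hmem.frequently
  exact ⟨q, hsol.tendsto_of_mapClusterPt hα hm hcσ hq⟩

theorem exists_extension (hsol : IsSolnOn α m x v (Ico c σ)) (hcσ : c < σ) {q : Fin N → E3}
    (hq : OffDiag q) (hlim : Tendsto x (𝓝[<] σ) (𝓝 q)) :
    ∃ σ' > σ, ∃ x' v' : ℝ → Fin N → E3, IsSolnOn α m x' v' (Ico c σ') ∧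
      EqOn x' x (Iio σ) ∧ EqOn v' v (Iio σ) := by
  have hdom : Ico c σ ∈ 𝓝[<] σ := Ico_mem_nhdsLT hcσ
  have haccel : ContDiffAt ℝ 1 (accel α m) q := contDiffAt_accel α m hq
  obtain ⟨p, hp⟩ : ∃ p, Tendsto v (𝓝[<] σ) (𝓝 p) :=
    exists_tendsto_nhdsLT_of_isBoundedUnder_deriv
      (mem_of_superset hdom fun t ht => hsol.hasDerivAt_velocity ht)
      (haccel.continuousAt.tendsto.comp hlim).norm.isBoundedUnder_le
  have hfield : ContDiffAt ℝ 1 (phaseField α m) (q, p) :=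
    contDiffAt_snd.prodMk (ContDiffAt.comp (q, p) haccel contDiffAt_fst)
  obtain ⟨z, hz_eq, hzσ, hz⟩ := exists_integralCurve_extension hfield
    (mem_of_superset hdom fun t ht => hsol.hasDerivAt_phase ht) (hlim.prodMk_nhds hp)
  have hz_off : ∀ᶠ t in 𝓝 σ, OffDiag (z t).1 :=
    hz.self_of_nhds.continuousAt.fst.eventually (isOpen_offDiag.mem_nhds (by simpa [hzσ] using hq))
  obtain ⟨σ', hσ', hsub⟩ := mem_nhdsGE_iff_exists_Ico_subset.1
    (mem_nhdsWithin_of_mem_nhds (hz_off.and hz))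
  have hsol' : ∀ t ∈ Ico c σ', OffDiag (z t).1 ∧ HasDerivAt z (phaseField α m (z t)) t := by
    intro t ht
    rcases lt_or_ge t σ with htσ | hσt
    · rw [hz_eq htσ]
      exact ⟨hsol.offDiag ⟨ht.1, htσ⟩, (hsol.hasDerivAt_phase ⟨ht.1, htσ⟩).congr_of_eventuallyEq
        (hz_eq.eventuallyEq_of_mem (Iio_mem_nhds htσ))⟩
    · exact hsub ⟨hσt, ht.2⟩
  exact ⟨σ', hσ', fun t => (z t).1, fun t => (z t).2,
    of_hasDerivAt_phase (fun t ht => (hsol' t ht).1) fun t ht => (hsol' t ht).2,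
    fun t ht => congrArg Prod.fst (hz_eq ht), fun t ht => congrArg Prod.snd (hz_eq ht)⟩

end IsSolnOn

theorem dom_coe (σ : ℝ) : Dom σ = Ico 0 σ := by
  ext t
  simp only [Dom, EReal.coe_lt_coe_iff, mem_ofPred_eq, mem_Ico]

theorem singularity_is_collision_general {N : ℕ} {α : ℝ} (hα : 2 ≤ α) {m : Fin N → ℝ}
    (hm : ∀ i, 0 < m i) {σ : ℝ} {x v : ℝ → Fin N → E3} (hx : IsMaxSoln α m σ x v) :
    ∃ q : Fin N → E3, (∃ i j, i ≠ j ∧ q i = q j) ∧ Tendsto x (𝓝[<] σ) (𝓝 q) := by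
  obtain ⟨hpos, hsol, hmax⟩ := hx
  have hσ : 0 < σ := EReal.coe_pos.1 hpos
  simp only [dom_coe] at hsol hmax
  obtain ⟨q, hq⟩ := hsol.exists_tendsto hα hm hσ
  refine ⟨q, ?_, hq⟩
  by_contra! hoff
  obtain ⟨σ', hσ', x', v', hsol', hx', hv'⟩ := hsol.exists_extension hσ hoff hq
  have hle : (σ' : EReal) ≤ σ :=
    hmax σ' x' v' (by rwa [dom_coe]) fun t ht => ⟨hx' ht.2, hv' ht.2⟩
  exact hσ'.not_ge (EReal.coe_le_coe_iff.1 hle)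

/-- **Every singularity is a collision singularity** for `α > 2`: if the maximal time of
existence `σ` is finite, then `x(t)` converges as `t → σ⁻` to a definite point of the
collision set `Δ`. -/
theorem singularity_is_collision {N : ℕ} (α : ℝ) (hα : 2 < α)
    (m : Fin N → ℝ) (hm : ∀ i, 0 < m i)
    (σ : ℝ) (x v : ℝ → Fin N → E3) (hx : IsMaxSoln α m (σ : EReal) x v) :
    ∃ q : Fin N → E3, (∃ i j, i ≠ j ∧ q i = q j) ∧
      Filter.Tendsto x (nhdsWithin σ (Set.Iio σ)) (nhds q) := by
  exact singularity_is_collision_general hα.le hm hx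

end
end NBodyPaper
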